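/- Let ρ ∈ (0,1), κ > 0, N1 ≥ N2 > 0, and D1, D2 ∈ (0,1) with (1−D1)·(1−D2) ≥ ρ²; set δ := 1−D1, A(ν) := ((1−ρ²)/(D1·(1−ν²δ) − (ρ−νδ)²))^{1/κ}, P(ν) := N1·(A(ν) − 1) + N2·(((1−ν²δ)/D2)^{1/κ} − 1)·A(ν), P_sep := inf{ P(ν) : ν ∈ [ρ, min(1/ρ, ρ/δ, √((1−D2)/δ))] }, and P_outer := N1·(D1^{−1/κ} − 1) + N2·D1^{−1/κ}·(((1−ρ²)/D2)^{1/κ} − 1). Then P_sep / P_outer ≤ min{ 1 + (1+ρ)^{1/κ}·((1+ρ²)^{1/κ} − 1)/((1+ρ)^{1/κ} − (1−ρ)^{1/κ}) , ((1+ρ)²/(1+2ρ))^{1/κ} + (((1+ρ)²/(1+2ρ))^{1/κ} − 1)/((1−ρ²)^{−1/κ} − 1) }. -/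

import Mathlib

/-!
`P_sep` is at most `P(ν)` at every feasible `ν`, and two choices of `ν` each match one half of the
outer bound. At `ν = ρ` the factor `A(ρ) = D₁^(-1/κ)` is the one of the outer bound, so only the
term of the strong receiver is too large; its excess is controlled by `D₁ D₂ ≤ (1 - ρ)²`. At
`ν = ρ / √(1 - D₁)` one has `1 - ν² (1 - D₁) = 1 - ρ²`, so the term of the strong receiver is
exact, and `A(ν)` exceeds `D₁^(-1/κ)` by a factor of at most `((1 + ρ)² / (1 + 2ρ))^(1/κ)`.
-/

namespace SeparateCoding

section BroadcastPower

variable {N₁ N₂ a a' b b' k t w : ℝ}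

/-- The least power at which superposition coding over a degraded Gaussian broadcast channel with
noise powers `N₁ ≥ N₂` gives the weak receiver the factor `a = (P + N₁) / (P₂ + N₁)` and the strong
one the factor `b = (P₂ + N₂) / N₂`, where `P₂` is the part of the power `P` spent on the latter.
These factors are the exponentials of twice the rates per channel use. -/
noncomputable def broadcastPower (N₁ N₂ a b : ℝ) : ℝ :=
  N₁ * (a - 1) + N₂ * (b - 1) * a

theorem broadcastPower_eq_add (N₁ N₂ a b : ℝ) :
    broadcastPower N₁ N₂ a b = (N₁ - N₂) * (a - 1) + N₂ * (a * b - 1) := by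
  unfold broadcastPower
  ring

theorem broadcastPower_eq_sub (N₁ N₂ a b : ℝ) :
    broadcastPower N₁ N₂ a b = (N₁ - N₂ + N₂ * b) * a - N₁ := by
  unfold broadcastPower
  ring

theorem neg_le_broadcastPower (hN₂ : 0 ≤ N₂) (hN : N₂ ≤ N₁) (ha : 0 ≤ a) (hb : 0 ≤ b) :
    -N₁ ≤ broadcastPower N₁ N₂ a b := by
  have hcoeff : 0 ≤ N₁ - N₂ + N₂ * b := add_nonneg (sub_nonneg.2 hN) (mul_nonneg hN₂ hb)
  rw [broadcastPower_eq_sub]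
  linarith [mul_nonneg hcoeff ha]

theorem mul_sub_one_le_broadcastPower (hN₂ : 0 ≤ N₂) (ha : 0 ≤ a) (hb : 1 ≤ b) :
    N₁ * (a - 1) ≤ broadcastPower N₁ N₂ a b :=
  le_add_of_nonneg_right (mul_nonneg (mul_nonneg hN₂ (sub_nonneg.2 hb)) ha)

theorem mul_mul_sub_one_le_broadcastPower (hN : N₂ ≤ N₁) (ha : 1 ≤ a) :
    N₂ * (a * b - 1) ≤ broadcastPower N₁ N₂ a b := by
  rw [broadcastPower_eq_add]
  exact le_add_of_nonneg_left (mul_nonneg (sub_nonneg.2 hN) (sub_nonneg.2 ha))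

theorem broadcastPower_le_of_strong_excess (hN₂ : 0 ≤ N₂) (hN : N₂ ≤ N₁) (ha : 1 ≤ a) (hk : 0 ≤ k)
    (h : a * b' - a * b ≤ k * (a * b - 1)) :
    broadcastPower N₁ N₂ a b' ≤ (1 + k) * broadcastPower N₁ N₂ a b :=
  calc broadcastPower N₁ N₂ a b'
      = broadcastPower N₁ N₂ a b + N₂ * (a * b' - a * b) := by
        unfold broadcastPower
        ring
    _ ≤ broadcastPower N₁ N₂ a b + N₂ * (k * (a * b - 1)) := by gcongr
    _ = broadcastPower N₁ N₂ a b + k * (N₂ * (a * b - 1)) := by ring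
    _ ≤ broadcastPower N₁ N₂ a b + k * broadcastPower N₁ N₂ a b := by
        gcongr
        exact mul_mul_sub_one_le_broadcastPower hN ha
    _ = (1 + k) * broadcastPower N₁ N₂ a b := by ring

theorem broadcastPower_le_of_weak_excess (hN₂ : 0 ≤ N₂) (hN : N₂ ≤ N₁) (hb : 1 ≤ b) (ht : 1 ≤ t)
    (hw : 1 < w) (hwa : w ≤ a) (h : a' ≤ t * a) :
    broadcastPower N₁ N₂ a' b ≤ (t + (t - 1) / (w - 1)) * broadcastPower N₁ N₂ a b := by
  have hN₁ : 0 ≤ N₁ := hN₂.trans hN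
  have hcoeff : 0 ≤ N₁ - N₂ + N₂ * b :=
    add_nonneg (sub_nonneg.2 hN) (mul_nonneg hN₂ (zero_le_one.trans hb))
  have hw' : 0 < w - 1 := sub_pos.2 hw
  have hwP : N₁ * (w - 1) ≤ broadcastPower N₁ N₂ a b :=
    calc N₁ * (w - 1) ≤ N₁ * (a - 1) := by gcongr
      _ ≤ broadcastPower N₁ N₂ a b := mul_sub_one_le_broadcastPower hN₂ (by linarith) hb
  calc broadcastPower N₁ N₂ a' b
      = (N₁ - N₂ + N₂ * b) * a' - N₁ := broadcastPower_eq_sub ..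
    _ ≤ (N₁ - N₂ + N₂ * b) * (t * a) - N₁ :=
        sub_le_sub_right (mul_le_mul_of_nonneg_left h hcoeff) N₁
    _ = t * broadcastPower N₁ N₂ a b + (t - 1) / (w - 1) * (N₁ * (w - 1)) := by
        rw [broadcastPower_eq_sub]
        field_simp
        ring
    _ ≤ t * broadcastPower N₁ N₂ a b + (t - 1) / (w - 1) * broadcastPower N₁ N₂ a b := by
        have : 0 ≤ t - 1 := sub_nonneg.2 ht
        gcongr
    _ = (t + (t - 1) / (w - 1)) * broadcastPower N₁ N₂ a b := by ring

end BroadcastPower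

/-- The denominator in the factor `A(ν)` that the weak receiver needs. -/
noncomputable def weakDenom (ρ D₁ ν : ℝ) : ℝ :=
  D₁ * (1 - ν ^ 2 * (1 - D₁)) - (ρ - ν * (1 - D₁)) ^ 2

/-- The factor `A(ν)` that the weak receiver needs, with exponent `s = 1 / κ`. -/
noncomputable def weakFactor (ρ s D₁ ν : ℝ) : ℝ :=
  ((1 - ρ ^ 2) / weakDenom ρ D₁ ν) ^ s

/-- The factor that the strong receiver needs when the separate scheme operates at `ν`, with
exponent `s = 1 / κ`. -/
noncomputable def strongFactor (s D₁ D₂ ν : ℝ) : ℝ :=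
  ((1 - ν ^ 2 * (1 - D₁)) / D₂) ^ s

/-- The power `P(ν)` of the separate scheme operating at `ν`, with exponent `s = 1 / κ`. -/
noncomputable def sepPower (ρ s N₁ N₂ D₁ D₂ ν : ℝ) : ℝ :=
  broadcastPower N₁ N₂ (weakFactor ρ s D₁ ν) (strongFactor s D₁ D₂ ν)

/-- The range of the parameter `ν` of the separate scheme. -/
noncomputable def feasibleInterval (ρ D₁ D₂ : ℝ) : Set ℝ :=
  Set.Icc ρ (min (1 / ρ) (min (ρ / (1 - D₁)) (√((1 - D₂) / (1 - D₁)))))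

/-- The power `P_sep` of the optimal separate scheme, with exponent `s = 1 / κ`. -/
noncomputable def minSepPower (ρ s N₁ N₂ D₁ D₂ : ℝ) : ℝ :=
  sInf (sepPower ρ s N₁ N₂ D₁ D₂ '' feasibleInterval ρ D₁ D₂)

/-- The power `P_outer` implied by the outer bound, with exponent `s = 1 / κ`. -/
noncomputable def outerPower (ρ s N₁ N₂ D₁ D₂ : ℝ) : ℝ :=
  N₁ * (D₁ ^ (-s) - 1) + N₂ * D₁ ^ (-s) * (((1 - ρ ^ 2) / D₂) ^ s - 1)

/-- The bound, uniform in the noise powers and distortions, on the relative power excess of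
operating at `ν = ρ`, with exponent `s = 1 / κ`. -/
noncomputable def strongExcess (ρ s : ℝ) : ℝ :=
  (1 + ρ) ^ s * ((1 + ρ ^ 2) ^ s - 1) / ((1 + ρ) ^ s - (1 - ρ) ^ s)

variable {ρ s N₁ N₂ D₁ D₂ ν : ℝ}

theorem outerPower_eq_broadcastPower (ρ s N₁ N₂ D₁ D₂ : ℝ) :
    outerPower ρ s N₁ N₂ D₁ D₂ =
      broadcastPower N₁ N₂ (D₁ ^ (-s)) (((1 - ρ ^ 2) / D₂) ^ s) := by
  unfold outerPower broadcastPower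
  ring

theorem outerPower_pos (hs : 0 < s) (hN₁ : 0 < N₁) (hN₂ : 0 ≤ N₂) (hD₁ : D₁ ∈ Set.Ioo 0 1)
    (hD₂ : 0 < D₂) (hρD₂ : D₂ ≤ 1 - ρ ^ 2) : 0 < outerPower ρ s N₁ N₂ D₁ D₂ := by
  have hX : 1 < D₁ ^ (-s) :=
    Real.one_lt_rpow_of_pos_of_lt_one_of_neg hD₁.1 hD₁.2 (neg_lt_zero.2 hs)
  rw [outerPower_eq_broadcastPower]
  exact (mul_pos hN₁ (sub_pos.2 hX)).trans_le <| mul_sub_one_le_broadcastPower hN₂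
    (zero_le_one.trans hX.le) (Real.one_le_rpow ((one_le_div hD₂).2 hρD₂) hs.le)

theorem weakDenom_eq (ρ D₁ ν : ℝ) :
    weakDenom ρ D₁ ν = D₁ * (1 - ρ ^ 2) - (1 - D₁) * (ν - ρ) ^ 2 := by
  unfold weakDenom
  ring

theorem feasibleInterval_eq_Icc (hρ : 0 < ρ) (hD₁ : D₁ < 1) (hD₂ : 0 ≤ D₂)
    (hreg : ρ ^ 2 ≤ (1 - D₁) * (1 - D₂)) :
    feasibleInterval ρ D₁ D₂ = Set.Icc ρ (ρ / (1 - D₁)) := by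
  have hδ : 0 < 1 - D₁ := sub_pos.2 hD₁
  have hsqrt : ρ / (1 - D₁) ≤ √((1 - D₂) / (1 - D₁)) := by
    apply Real.le_sqrt_of_sq_le
    rw [div_pow, div_le_div_iff₀ (pow_pos hδ 2) hδ]
    nlinarith
  have hinv : ρ / (1 - D₁) ≤ 1 / ρ := by
    rw [div_le_div_iff₀ hδ hρ]
    nlinarith
  rw [feasibleInterval, min_eq_left hsqrt, min_eq_right hinv]

theorem one_sub_sq_mul_nonneg (hρ : 0 ≤ ρ) (hD₁ : D₁ < 1) (hρD₁ : ρ ^ 2 ≤ 1 - D₁)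
    (hν : ν ∈ Set.Icc ρ (ρ / (1 - D₁))) : 0 ≤ 1 - ν ^ 2 * (1 - D₁) := by
  have hδ : 0 < 1 - D₁ := sub_pos.2 hD₁
  have hν₀ : 0 ≤ ν := hρ.trans hν.1
  have hν₁ : ν ≤ ρ / (1 - D₁) := hν.2
  rw [sub_nonneg]
  calc ν ^ 2 * (1 - D₁) ≤ (ρ / (1 - D₁)) ^ 2 * (1 - D₁) := by gcongr
    _ = ρ ^ 2 / (1 - D₁) := by field_simp
    _ ≤ 1 := (div_le_one hδ).2 hρD₁

theorem weakDenom_nonneg (hD₁ : D₁ ∈ Set.Ico 0 1) (hρD₁ : ρ ^ 2 ≤ 1 - D₁)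
    (hν : ν ∈ Set.Icc ρ (ρ / (1 - D₁))) : 0 ≤ weakDenom ρ D₁ ν := by
  have hδ : 0 < 1 - D₁ := sub_pos.2 hD₁.2
  have hν₀ : 0 ≤ ν - ρ := sub_nonneg.2 hν.1
  have hν₁ : ν ≤ ρ / (1 - D₁) := hν.2
  rw [weakDenom_eq, sub_nonneg]
  calc (1 - D₁) * (ν - ρ) ^ 2 ≤ (1 - D₁) * (ρ / (1 - D₁) - ρ) ^ 2 := by gcongr
    _ = D₁ * (D₁ * ρ ^ 2 / (1 - D₁)) := by
        field_simp
        ring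
    _ ≤ D₁ * (1 - ρ ^ 2) := by
        refine mul_le_mul_of_nonneg_left ((div_le_iff₀ hδ).2 ?_) hD₁.1
        linarith

theorem minSepPower_le_sepPower (hρ : 0 < ρ) (hN₂ : 0 ≤ N₂) (hN : N₂ ≤ N₁)
    (hD₁ : D₁ ∈ Set.Ico 0 1) (hD₂ : 0 ≤ D₂) (hreg : ρ ^ 2 ≤ (1 - D₁) * (1 - D₂))
    (hν : ν ∈ Set.Icc ρ (ρ / (1 - D₁))) :
    minSepPower ρ s N₁ N₂ D₁ D₂ ≤ sepPower ρ s N₁ N₂ D₁ D₂ ν := by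
  have hρD₁ : ρ ^ 2 ≤ 1 - D₁ :=
    hreg.trans (mul_le_of_le_one_right (sub_nonneg.2 hD₁.2.le) (sub_le_self 1 hD₂))
  have hρ₁ : 0 ≤ 1 - ρ ^ 2 := by linarith [hD₁.1]
  rw [minSepPower, feasibleInterval_eq_Icc hρ hD₁.2 hD₂ hreg]
  refine csInf_le ⟨-N₁, ?_⟩ (Set.mem_image_of_mem _ hν)
  rintro _ ⟨μ, hμ, rfl⟩
  exact neg_le_broadcastPower hN₂ hN
    (Real.rpow_nonneg (div_nonneg hρ₁ (weakDenom_nonneg hD₁ hρD₁ hμ)) s)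
    (Real.rpow_nonneg (div_nonneg (one_sub_sq_mul_nonneg hρ.le hD₁.2 hρD₁ hμ) hD₂) s)

theorem weakFactor_self (hρ : ρ ^ 2 < 1) (hD₁ : 0 ≤ D₁) : weakFactor ρ s D₁ ρ = D₁ ^ (-s) := by
  have hρ₁ : 1 - ρ ^ 2 ≠ 0 := (sub_pos.2 hρ).ne'
  have hbase : (1 - ρ ^ 2) / weakDenom ρ D₁ ρ = D₁⁻¹ := by
    rw [weakDenom_eq, sub_self, zero_pow two_ne_zero, mul_zero, sub_zero,
      div_mul_cancel_right₀ hρ₁]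
  rw [weakFactor, hbase, Real.inv_rpow hD₁, Real.rpow_neg hD₁]

-- Squared form of `√(D₁ D₂) + √((1 - D₁) (1 - D₂)) ≤ 1`, which is AM-GM applied twice.
theorem mul_le_one_sub_sq (hD₁ : D₁ ∈ Set.Icc 0 1) (hD₂ : D₂ ∈ Set.Icc 0 1)
    (hreg : ρ ^ 2 ≤ (1 - D₁) * (1 - D₂)) : D₁ * D₂ ≤ (1 - ρ) ^ 2 := by
  obtain ⟨hD₁₀, hD₁₁⟩ := hD₁
  obtain ⟨hD₂₀, hD₂₁⟩ := hD₂
  have hsum : 2 * ρ ≤ (1 - D₁) + (1 - D₂) := by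
    refine le_of_sq_le_sq ?_ (by linarith)
    linarith [four_mul_le_sq_add (1 - D₁) (1 - D₂)]
  have hsq : (D₁ + D₂) ^ 2 ≤ (2 * (1 - ρ)) ^ 2 :=
    pow_le_pow_left₀ (add_nonneg hD₁₀ hD₂₀) (by linarith) 2
  linarith [four_mul_le_sq_add D₁ D₂]

theorem one_sub_rpow_lt_one_add_rpow (hρ : ρ ∈ Set.Ioc 0 1) (hs : 0 < s) :
    (1 - ρ) ^ s < (1 + ρ) ^ s :=
  Real.rpow_lt_rpow (sub_nonneg.2 hρ.2) (by linarith [hρ.1]) hs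

theorem strongExcess_nonneg (hρ : ρ ∈ Set.Ioc 0 1) (hs : 0 < s) : 0 ≤ strongExcess ρ s := by
  have hc : 1 ≤ (1 + ρ ^ 2) ^ s := Real.one_le_rpow (le_add_of_nonneg_right (sq_nonneg ρ)) hs.le
  exact div_nonneg
    (mul_nonneg (Real.rpow_nonneg (by linarith [hρ.1]) s) (sub_nonneg.2 hc))
    (sub_nonneg.2 (one_sub_rpow_lt_one_add_rpow hρ hs).le)

-- Equality holds for `u = (1 - ρ²)(1 + ρ²)` and `z = (1 - ρ)²`, which explains `strongExcess`.
theorem div_rpow_sub_div_rpow_le {u z : ℝ} (hρ : ρ ∈ Set.Ioc 0 1) (hs : 0 < s) (hu₀ : 0 ≤ u)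
    (hu : u ≤ (1 - ρ ^ 2) * (1 + ρ ^ 2)) (hz₀ : 0 < z) (hz : z ≤ (1 - ρ) ^ 2) :
    (u / z) ^ s - ((1 - ρ ^ 2) / z) ^ s ≤
      strongExcess ρ s * (((1 - ρ ^ 2) / z) ^ s - 1) := by
  have hadd : 0 ≤ 1 + ρ := by linarith [hρ.1]
  have hsub : 0 ≤ 1 - ρ := sub_nonneg.2 hρ.2
  have hK := strongExcess_nonneg hρ hs
  have hKdef : strongExcess ρ s * ((1 + ρ) ^ s - (1 - ρ) ^ s) =
      (1 + ρ) ^ s * ((1 + ρ ^ 2) ^ s - 1) :=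
    div_mul_cancel₀ _ (sub_pos.2 (one_sub_rpow_lt_one_add_rpow hρ hs)).ne'
  have hfactor : 1 - ρ ^ 2 = (1 + ρ) * (1 - ρ) := by ring
  have hv : (1 - ρ ^ 2) ^ s = (1 + ρ) ^ s * (1 - ρ) ^ s := by
    rw [hfactor, Real.mul_rpow hadd hsub]
  have hv₀ : 0 ≤ 1 - ρ ^ 2 := hfactor ▸ mul_nonneg hadd hsub
  have hus : u ^ s ≤ (1 - ρ ^ 2) ^ s * (1 + ρ ^ 2) ^ s := by
    rw [← Real.mul_rpow hv₀ (by positivity)]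
    exact Real.rpow_le_rpow hu₀ hu hs.le
  have hzs : z ^ s ≤ (1 - ρ) ^ s * (1 - ρ) ^ s := by
    rw [← Real.mul_rpow hsub hsub, ← sq]
    exact Real.rpow_le_rpow hz₀.le hz hs.le
  have hcleared : u ^ s - (1 - ρ ^ 2) ^ s ≤ strongExcess ρ s * ((1 - ρ ^ 2) ^ s - z ^ s) :=
    calc u ^ s - (1 - ρ ^ 2) ^ s ≤ (1 - ρ ^ 2) ^ s * (1 + ρ ^ 2) ^ s - (1 - ρ ^ 2) ^ s := by gcongr
      _ = strongExcess ρ s * ((1 - ρ ^ 2) ^ s - (1 - ρ) ^ s * (1 - ρ) ^ s) := by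
          rw [hv]
          linear_combination -(1 - ρ) ^ s * hKdef
      _ ≤ strongExcess ρ s * ((1 - ρ ^ 2) ^ s - z ^ s) := by gcongr
  have hzpos : 0 < z ^ s := Real.rpow_pos_of_pos hz₀ s
  rw [Real.div_rpow hu₀ hz₀.le, Real.div_rpow hv₀ hz₀.le, ← sub_div, div_sub_one hzpos.ne',
    ← mul_div_assoc]
  gcongr

theorem rpow_neg_mul_div_rpow {x y z : ℝ} (hx : 0 ≤ x) (hy : 0 ≤ y) (hz : 0 ≤ z) :
    x ^ (-s) * (y / z) ^ s = (y / (x * z)) ^ s := by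
  rw [Real.rpow_neg hx, ← Real.inv_rpow hx, ← Real.mul_rpow (inv_nonneg.2 hx) (div_nonneg hy hz),
    inv_mul_eq_div, div_div, mul_comm z]

theorem sepPower_self_le (hρ : ρ ∈ Set.Ioo 0 1) (hs : 0 < s) (hN₂ : 0 ≤ N₂) (hN : N₂ ≤ N₁)
    (hD₁ : D₁ ∈ Set.Ioo 0 1) (hD₂ : D₂ ∈ Set.Ioc 0 1) (hreg : ρ ^ 2 ≤ (1 - D₁) * (1 - D₂)) :
    sepPower ρ s N₁ N₂ D₁ D₂ ρ ≤ (1 + strongExcess ρ s) * outerPower ρ s N₁ N₂ D₁ D₂ := by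
  have hρ' : ρ ∈ Set.Ioc 0 1 := Set.Ioo_subset_Ioc_self hρ
  have hρ₁ : ρ ^ 2 < 1 := pow_lt_one₀ hρ.1.le hρ.2 two_ne_zero
  have hρD₁ : ρ ^ 2 ≤ 1 - D₁ :=
    hreg.trans (mul_le_of_le_one_right (sub_nonneg.2 hD₁.2.le) (sub_le_self 1 hD₂.1.le))
  have hu₀ : 0 ≤ 1 - ρ ^ 2 * (1 - D₁) :=
    sub_nonneg.2 (mul_le_one₀ hρ₁.le (sub_nonneg.2 hD₁.2.le) (sub_le_self 1 hD₁.1.le))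
  have hu : 1 - ρ ^ 2 * (1 - D₁) ≤ (1 - ρ ^ 2) * (1 + ρ ^ 2) := by
    linarith [mul_le_mul_of_nonneg_left hρD₁ (sq_nonneg ρ)]
  rw [sepPower, outerPower_eq_broadcastPower, weakFactor_self hρ₁ hD₁.1.le, strongFactor]
  apply broadcastPower_le_of_strong_excess hN₂ hN
    (Real.one_le_rpow_of_pos_of_le_one_of_nonpos hD₁.1 hD₁.2.le (neg_nonpos.2 hs.le))
    (strongExcess_nonneg hρ' hs)
  rw [rpow_neg_mul_div_rpow hD₁.1.le hu₀ hD₂.1.le,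
    rpow_neg_mul_div_rpow hD₁.1.le (sub_nonneg.2 hρ₁.le) hD₂.1.le]
  exact div_rpow_sub_div_rpow_le hρ' hs hu₀ hu (mul_pos hD₁.1 hD₂.1)
    (mul_le_one_sub_sq (Set.Ioo_subset_Icc_self hD₁) (Set.Ioc_subset_Icc_self hD₂) hreg)

theorem div_sqrt_mem_Icc (hρ : 0 ≤ ρ) (hD₁ : D₁ ∈ Set.Ico 0 1) :
    ρ / √(1 - D₁) ∈ Set.Icc ρ (ρ / (1 - D₁)) := by
  have hδ : 0 < 1 - D₁ := sub_pos.2 hD₁.2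
  have hδ₁ : 1 - D₁ ≤ 1 := sub_le_self 1 hD₁.1
  exact ⟨le_div_self hρ (Real.sqrt_pos.2 hδ) (Real.sqrt_le_one.2 hδ₁),
    div_le_div_of_nonneg_left hρ hδ
      (Real.le_sqrt_of_sq_le (pow_le_of_le_one hδ.le hδ₁ two_ne_zero))⟩

theorem strongFactor_div_sqrt (ρ s D₂ : ℝ) (hD₁ : D₁ < 1) :
    strongFactor s D₁ D₂ (ρ / √(1 - D₁)) = ((1 - ρ ^ 2) / D₂) ^ s := by
  have hδ : 0 < 1 - D₁ := sub_pos.2 hD₁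
  rw [strongFactor, div_pow, Real.sq_sqrt hδ.le, div_mul_cancel₀ _ hδ.ne']

theorem weakDenom_div_sqrt (ρ : ℝ) (hD₁ : D₁ < 1) :
    weakDenom ρ D₁ (ρ / √(1 - D₁)) = D₁ * (1 - ρ ^ 2) - ρ ^ 2 * (1 - √(1 - D₁)) ^ 2 := by
  have hδ : 0 < 1 - D₁ := sub_pos.2 hD₁
  have hq : √(1 - D₁) ≠ 0 := (Real.sqrt_pos.2 hδ).ne'
  have hsq : √(1 - D₁) * (ρ / √(1 - D₁) - ρ) = ρ * (1 - √(1 - D₁)) := by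
    field_simp
  rw [weakDenom_eq, ← mul_pow, ← hsq, mul_pow, Real.sq_sqrt hδ.le]

-- The constant is the worst case `√(1 - D₁) = ρ`, at which equality holds.
theorem mul_le_weakDenom_div_sqrt (hρ : 0 ≤ ρ) (hD₁ : D₁ ∈ Set.Ico 0 1) (hρD₁ : ρ ^ 2 ≤ 1 - D₁) :
    D₁ * (1 - ρ ^ 2) * (1 + 2 * ρ) ≤ (1 + ρ) ^ 2 * weakDenom ρ D₁ (ρ / √(1 - D₁)) := by
  have hq : √(1 - D₁) ^ 2 = 1 - D₁ := Real.sq_sqrt (sub_nonneg.2 hD₁.2.le)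
  have hq₁ : 0 ≤ 1 - √(1 - D₁) := sub_nonneg.2 (Real.sqrt_le_one.2 (sub_le_self 1 hD₁.1))
  have hρq : 0 ≤ √(1 - D₁) - ρ := sub_nonneg.2 (Real.le_sqrt_of_sq_le hρD₁)
  have hgap : (1 + ρ) ^ 2 * weakDenom ρ D₁ (ρ / √(1 - D₁)) - D₁ * (1 - ρ ^ 2) * (1 + 2 * ρ) =
      2 * ρ ^ 2 * (1 + ρ) * (1 - √(1 - D₁)) * (√(1 - D₁) - ρ) := by
    rw [weakDenom_div_sqrt ρ hD₁.2]
    linear_combination (1 - ρ ^ 2) * ρ ^ 2 * hq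
  rw [← sub_nonneg, hgap]
  positivity

theorem weakFactor_div_sqrt_le (hρ : 0 ≤ ρ) (hs : 0 ≤ s) (hD₁ : D₁ ∈ Set.Ioo 0 1)
    (hρD₁ : ρ ^ 2 ≤ 1 - D₁) :
    weakFactor ρ s D₁ (ρ / √(1 - D₁)) ≤ ((1 + ρ) ^ 2 / (1 + 2 * ρ)) ^ s * D₁ ^ (-s) := by
  have hD₁₀ : 0 < D₁ := hD₁.1
  have hρ₁ : 0 < 1 - ρ ^ 2 := by linarith
  have hle := mul_le_weakDenom_div_sqrt hρ (Set.Ioo_subset_Ico_self hD₁) hρD₁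
  have hdenom : 0 < weakDenom ρ D₁ (ρ / √(1 - D₁)) :=
    pos_of_mul_pos_right (lt_of_lt_of_le (by positivity) hle) (sq_nonneg (1 + ρ))
  rw [mul_comm, rpow_neg_mul_div_rpow hD₁₀.le (sq_nonneg _) (by positivity)]
  refine Real.rpow_le_rpow (by positivity) ?_ hs
  rw [div_le_div_iff₀ hdenom (by positivity)]
  linarith

theorem sepPower_div_sqrt_le (hρ : 0 < ρ) (hs : 0 < s) (hN₂ : 0 ≤ N₂) (hN : N₂ ≤ N₁)
    (hD₁ : D₁ ∈ Set.Ioo 0 1) (hD₂ : 0 < D₂) (hρD₁ : D₁ ≤ 1 - ρ ^ 2) (hρD₂ : D₂ ≤ 1 - ρ ^ 2) :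
    sepPower ρ s N₁ N₂ D₁ D₂ (ρ / √(1 - D₁)) ≤
      (((1 + ρ) ^ 2 / (1 + 2 * ρ)) ^ s +
        (((1 + ρ) ^ 2 / (1 + 2 * ρ)) ^ s - 1) / ((1 - ρ ^ 2) ^ (-s) - 1)) *
        outerPower ρ s N₁ N₂ D₁ D₂ := by
  have ht : 1 ≤ (1 + ρ) ^ 2 / (1 + 2 * ρ) := by
    rw [one_le_div (by positivity)]
    linarith [sq_nonneg ρ]
  rw [sepPower, outerPower_eq_broadcastPower, strongFactor_div_sqrt ρ s D₂ hD₁.2]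
  exact broadcastPower_le_of_weak_excess hN₂ hN
    (Real.one_le_rpow ((one_le_div hD₂).2 hρD₂) hs.le) (Real.one_le_rpow ht hs.le)
    (Real.one_lt_rpow_of_pos_of_lt_one_of_neg (hD₁.1.trans_le hρD₁)
      (sub_lt_self 1 (pow_pos hρ 2)) (neg_lt_zero.2 hs))
    (Real.rpow_le_rpow_of_nonpos hD₁.1 hρD₁ (neg_nonpos.2 hs.le))
    (weakFactor_div_sqrt_le hρ.le hs.le hD₁ (le_sub_comm.1 hρD₁))

end SeparateCoding

open SeparateCoding

/-- For `ρ ∈ (0,1)`, `κ > 0`, `N1 ≥ N2 > 0`, `D1, D2 ∈ (0,1)` with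
`(1−D1)(1−D2) ≥ ρ²` and `δ := 1−D1`, with
`A(ν) := ((1−ρ²)/(D1(1−ν²δ) − (ρ−νδ)²))^{1/κ}`,
`P(ν) := N1(A(ν) − 1) + N2(((1−ν²δ)/D2)^{1/κ} − 1)·A(ν)`,
`P_sep := inf{P(ν) : ν ∈ [ρ, min(1/ρ, ρ/δ, √((1−D2)/δ))]}` and
`P_outer := N1(D1^{−1/κ} − 1) + N2·D1^{−1/κ}·(((1−ρ²)/D2)^{1/κ} − 1)`, the ratio
`P_sep/P_outer` is at most the minimum of the two universal bounds. -/
theorem universal_power_ratio_bound (ρ κ N1 N2 D1 D2 : ℝ)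
    (hρ : ρ ∈ Set.Ioo (0 : ℝ) 1) (hκ : 0 < κ) (hN2 : 0 < N2) (hN : N2 ≤ N1)
    (hD1 : D1 ∈ Set.Ioo (0 : ℝ) 1) (hD2 : D2 ∈ Set.Ioo (0 : ℝ) 1)
    (hreg : (1 - D1) * (1 - D2) ≥ ρ ^ 2) :
    sInf ((fun ν : ℝ =>
        N1 * (((1 - ρ ^ 2) /
            (D1 * (1 - ν ^ 2 * (1 - D1)) - (ρ - ν * (1 - D1)) ^ 2)) ^ (1 / κ) - 1)
        + N2 * (((1 - ν ^ 2 * (1 - D1)) / D2) ^ (1 / κ) - 1)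
          * ((1 - ρ ^ 2) /
            (D1 * (1 - ν ^ 2 * (1 - D1)) - (ρ - ν * (1 - D1)) ^ 2)) ^ (1 / κ)) ''
      Set.Icc ρ (min (1 / ρ)
        (min (ρ / (1 - D1)) (Real.sqrt ((1 - D2) / (1 - D1)))))) /
    (N1 * (D1 ^ (-1 / κ) - 1)
        + N2 * D1 ^ (-1 / κ) * (((1 - ρ ^ 2) / D2) ^ (1 / κ) - 1))
      ≤ min
        (1 + (1 + ρ) ^ (1 / κ) * ((1 + ρ ^ 2) ^ (1 / κ) - 1) /
            ((1 + ρ) ^ (1 / κ) - (1 - ρ) ^ (1 / κ)))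
        (((1 + ρ) ^ 2 / (1 + 2 * ρ)) ^ (1 / κ)
          + (((1 + ρ) ^ 2 / (1 + 2 * ρ)) ^ (1 / κ) - 1) /
              ((1 - ρ ^ 2) ^ (-1 / κ) - 1)) := by
  have hs : 0 < 1 / κ := one_div_pos.2 hκ
  have hρD₁ : ρ ^ 2 ≤ 1 - D1 := by nlinarith [hD1.2, hD2.1]
  have hρD₂ : D2 ≤ 1 - ρ ^ 2 := by nlinarith [hD1.1, hD2.2]
  have hD1' : D1 ∈ Set.Ico 0 1 := Set.Ioo_subset_Ico_self hD1
  have hle {ν : ℝ} (hν : ν ∈ Set.Icc ρ (ρ / (1 - D1))) :=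
    minSepPower_le_sepPower (s := 1 / κ) hρ.1 hN2.le hN hD1' hD2.1.le hreg hν
  have hρ_mem : ρ ∈ Set.Icc ρ (ρ / (1 - D1)) :=
    ⟨le_rfl, le_div_self hρ.1.le (sub_pos.2 hD1.2) (sub_le_self 1 hD1.1.le)⟩
  have hpos : 0 < outerPower ρ (1 / κ) N1 N2 D1 D2 :=
    outerPower_pos hs (hN2.trans_le hN) hN2.le hD1 hD2.1 hρD₂
  rw [neg_div]
  change minSepPower ρ (1 / κ) N1 N2 D1 D2 / outerPower ρ (1 / κ) N1 N2 D1 D2 ≤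
    min (1 + strongExcess ρ (1 / κ)) _
  rw [le_min_iff, div_le_iff₀ hpos, div_le_iff₀ hpos]
  exact ⟨(hle hρ_mem).trans
      (sepPower_self_le hρ hs hN2.le hN hD1 (Set.Ioo_subset_Ioc_self hD2) hreg),
    (hle (div_sqrt_mem_Icc hρ.1.le hD1')).trans
      (sepPower_div_sqrt_le hρ.1 hs hN2.le hN hD1 hD2.1 (le_sub_comm.1 hρD₁) hρD₂)⟩
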